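/- Let n ≥ 2, let η be the pseudo-Euclidean bilinear form of signature (2, n−1) on ℝ^{n+1}, let ξ : ℝ^{n+1} → ℝ^{n+1} be an η-skew linear map, and let N, X satisfy η(N,N) = −1, X ≠ 0, η(X,X) = 0, η(N,X) = 0, η(X, ξN) = 0, X not an eigenvector of ξ, and suppose the vectors X, ξX, ξN are linearly dependent. Then, setting λ₀ := −η(ξN,ξX)/η(ξX,ξX), one has η(ξ(N+λ₀X), ξ(N+λ₀X)) = 0, and λ₀ is the unique real number λ with η(ξ(N+λX), ξ(N+λX)) = 0. -/

import Mathlib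

/-!
The number `c = η(ξX, ξX)` is nonzero: by skewness `ξX` is orthogonal to `X` and to `N`, and in the
Lorentzian space `N^⊥` a vector orthogonal to the null vector `X` and not proportional to it is
spacelike (`exists_smul_of_nonpos`). Since `X` and `ξX` are independent, the linear dependence
reads `ξN = a X + b ξX`. As `X` is null and orthogonal to `ξX`, this gives
`η(ξN, ξX) = b c` and `η(ξ(N + λX), ξ(N + λX)) = (b + λ)² c`, whose only zero is
`λ = -b = -η(ξN, ξX)/c`.
-/

/-- The pseudo-Euclidean bilinear form of signature `(2, m-2)` on `ℝ^m`:
`η(u,v) = -u₀v₀ - u₁v₁ + ∑_{i≥2} uᵢvᵢ`. -/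
noncomputable def eta {m : ℕ} (u v : Fin m → ℝ) : ℝ :=
  ∑ i : Fin m, (if (i : ℕ) < 2 then (-1 : ℝ) else 1) * (u i * v i)

theorem eta_add_left {m : ℕ} (u v w : Fin m → ℝ) : eta (u + v) w = eta u w + eta v w := by
  simp only [eta, ← Finset.sum_add_distrib, Pi.add_apply]
  exact Finset.sum_congr rfl fun i _ => by ring

theorem eta_smul_left {m : ℕ} (a : ℝ) (u w : Fin m → ℝ) : eta (a • u) w = a * eta u w := by
  simp only [eta, Finset.mul_sum, Pi.smul_apply, smul_eq_mul]
  exact Finset.sum_congr rfl fun i _ => by ring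

theorem eta_comm {m : ℕ} (u v : Fin m → ℝ) : eta u v = eta v u := by
  simp only [eta, mul_comm (u _)]

theorem eta_add_right {m : ℕ} (u v w : Fin m → ℝ) : eta w (u + v) = eta w u + eta w v := by
  rw [eta_comm, eta_add_left, eta_comm u, eta_comm v]

theorem eta_smul_right {m : ℕ} (a : ℝ) (u w : Fin m → ℝ) : eta w (a • u) = a * eta w u := by
  rw [eta_comm, eta_smul_left, eta_comm u]

/-- `η` is positive definite on the subspace where the two negative coordinates vanish. -/
theorem eq_zero_of_eta_nonpos {m : ℕ} (u : Fin m → ℝ) (h0 : ∀ i : Fin m, (i : ℕ) < 2 → u i = 0)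
    (h : eta u u ≤ 0) : u = 0 := by
  have hs : eta u u = ∑ i, u i * u i := by
    refine Finset.sum_congr rfl fun i _ => ?_
    split_ifs with hi
    · simp [h0 i hi]
    · simp
  have hz : ∑ i, u i * u i = 0 :=
    le_antisymm (hs ▸ h) (Finset.sum_nonneg fun i _ => mul_self_nonneg _)
  funext i
  exact mul_self_eq_zero.mp
    ((Finset.sum_eq_zero_iff_of_nonneg fun i _ => mul_self_nonneg (u i)).mp hz i
      (Finset.mem_univ i))

/-- In the orthogonal complement of a timelike vector `N`, a vector `Y` orthogonal to a nonzero null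
vector `X` is either spacelike or a multiple of `X`. Otherwise `N, X, Y` would span a
three-dimensional subspace on which `η` is negative semidefinite, which must meet the positive
definite subspace of codimension two nontrivially. -/
theorem exists_smul_of_nonpos {n : ℕ} (hn : 2 ≤ n) (N X Y : Fin (n + 1) → ℝ)
    (hN : eta N N = -1) (hX0 : X ≠ 0) (hX : eta X X = 0) (hNX : eta N X = 0)
    (hNY : eta N Y = 0) (hXY : eta X Y = 0) (hY : eta Y Y ≤ 0) : ∃ α : ℝ, Y = α • X := by
  let i0 : Fin (n + 1) := ⟨0, by omega⟩
  let i1 : Fin (n + 1) := ⟨1, by omega⟩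
  -- Two linear equations in three unknowns, padded with a zero row, have a nontrivial solution.
  obtain ⟨v, hv0, hv⟩ := (Matrix.exists_mulVec_eq_zero_iff
    (M := !![N i0, X i0, Y i0; N i1, X i1, Y i1; 0, 0, 0])).mpr (by simp [Matrix.det_fin_three])
  have e0 := congrFun hv 0
  have e1 := congrFun hv 1
  simp [Matrix.mulVec, dotProduct, Fin.sum_univ_three] at e0 e1
  have hu : v 0 • N + v 1 • X + v 2 • Y = 0 := by
    refine eq_zero_of_eta_nonpos _ (fun i hi => ?_) ?_
    · have hcase : i = i0 ∨ i = i1 := by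
        simp only [i0, i1, Fin.ext_iff]
        omega
      rcases hcase with rfl | rfl
      · simp only [Pi.add_apply, Pi.smul_apply, smul_eq_mul]
        linarith
      · simp only [Pi.add_apply, Pi.smul_apply, smul_eq_mul]
        linarith
    · simp only [eta_add_left, eta_add_right, eta_smul_left, eta_smul_right, eta_comm X N,
        eta_comm Y N, eta_comm Y X, hN, hX, hNX, hNY, hXY]
      nlinarith [sq_nonneg (v 0), mul_nonneg (sq_nonneg (v 2)) (neg_nonneg.mpr hY)]
  -- Pairing the relation with `N` isolates the coefficient of `N`.
  have h0 : v 0 = 0 := by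
    have hp : eta N (v 0 • N + v 1 • X + v 2 • Y) = 0 := by rw [hu]; simp [eta]
    simp only [eta_add_right, eta_smul_right, hN, hNX, hNY] at hp
    linarith
  rw [h0, zero_smul, zero_add] at hu
  have h2 : v 2 ≠ 0 := by
    intro h2
    rw [h2, zero_smul, add_zero] at hu
    have h1 := (smul_eq_zero.mp hu).resolve_right hX0
    exact hv0 (by funext i; fin_cases i <;> simp [h0, h1, h2])
  refine ⟨-(v 1) / v 2, ?_⟩
  funext i
  have hi := congrFun hu i
  simp only [Pi.add_apply, Pi.smul_apply, smul_eq_mul, Pi.zero_apply] at hi ⊢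
  field_simp
  linarith

/-- if X, ξX, ξN are linearly dependent, the null geodesic meets the
singularity exactly at the parameter `λ₀ = −η(ξN,ξX)/η(ξX,ξX)`. -/
theorem intersection_parameter (n : ℕ) (hn : 2 ≤ n)
    (ξ : (Fin (n + 1) → ℝ) →ₗ[ℝ] (Fin (n + 1) → ℝ))
    (hskew : ∀ u v : Fin (n + 1) → ℝ, eta (ξ u) v + eta u (ξ v) = 0)
    (N X : Fin (n + 1) → ℝ)
    (hN : eta N N = -1) (hX0 : X ≠ 0) (hX : eta X X = 0) (hNX : eta N X = 0)
    (hXxiN : eta X (ξ N) = 0)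
    (hXeig : ¬ (X ≠ 0 ∧ ∃ α : ℝ, ξ X = α • X))
    (hdep : ¬ LinearIndependent ℝ ![X, ξ X, ξ N]) :
    eta (ξ (N + (-(eta (ξ N) (ξ X)) / eta (ξ X) (ξ X)) • X))
        (ξ (N + (-(eta (ξ N) (ξ X)) / eta (ξ X) (ξ X)) • X)) = 0 ∧
      ∀ lam : ℝ, eta (ξ (N + lam • X)) (ξ (N + lam • X)) = 0 →
        lam = -(eta (ξ N) (ξ X)) / eta (ξ X) (ξ X) := by
  have hXY : eta X (ξ X) = 0 := by
    have h := hskew X X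
    rw [eta_comm (ξ X) X] at h
    linarith
  have hNY : eta N (ξ X) = 0 := by
    have h := hskew N X
    rw [eta_comm (ξ N) X] at h
    linarith
  have hc : eta (ξ X) (ξ X) ≠ 0 := fun hc =>
    hXeig ⟨hX0, exists_smul_of_nonpos hn N X (ξ X) hN hX0 hX hNX hNY hXY hc.le⟩
  obtain ⟨a, b, hab⟩ : ∃ a b : ℝ, ξ N = a • X + b • ξ X := by
    rw [Fintype.not_linearIndependent_iff] at hdep
    obtain ⟨g, hg, i, hi⟩ := hdep
    simp only [Fin.sum_univ_three, Matrix.cons_val] at hg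
    have h2 : g 2 ≠ 0 := by
      intro h2
      -- Pairing with `ξX`, which is orthogonal to `X`, isolates the coefficient of `ξX`.
      have hp : eta (g 0 • X + g 1 • ξ X + g 2 • ξ N) (ξ X) = 0 := by rw [hg]; simp [eta]
      simp only [eta_add_left, eta_smul_left, hXY, h2] at hp
      have h1 : g 1 = 0 := by simpa [hc] using hp
      rw [h1, h2, zero_smul, zero_smul, add_zero, add_zero] at hg
      have h0 := (smul_eq_zero.mp hg).resolve_right hX0
      fin_cases i
      · exact hi h0
      · exact hi h1
      · exact hi h2
    refine ⟨-(g 0) / g 2, -(g 1) / g 2, ?_⟩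
    funext j
    have hj := congrFun hg j
    simp only [Pi.add_apply, Pi.smul_apply, smul_eq_mul, Pi.zero_apply] at hj ⊢
    field_simp
    linarith
  have hYX : eta (ξ X) X = 0 := by rw [eta_comm, hXY]
  have hb : -(eta (ξ N) (ξ X)) / eta (ξ X) (ξ X) = -b := by
    rw [hab, eta_add_left, eta_smul_left, eta_smul_left, hXY]
    field_simp
    ring
  have hq : ∀ lam : ℝ, eta (ξ (N + lam • X)) (ξ (N + lam • X))
      = (b + lam) ^ 2 * eta (ξ X) (ξ X) := by
    intro lam
    rw [map_add, map_smul, hab]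
    simp only [eta_add_left, eta_add_right, eta_smul_left, eta_smul_right, hX, hXY, hYX]
    ring
  rw [hb]
  refine ⟨by rw [hq]; ring, fun lam hl => ?_⟩
  rw [hq] at hl
  have hz : b + lam = 0 := by simpa [hc] using hl
  linarith
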